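/- Let S = {(1,1), (−1,1), (1,−1)} ⊂ ℤ² and let cₙ be the number of quarter-plane walks of length n with steps S. Let α = 1 − 2·∑_{n≥0} (−1)ⁿ/(F(2n+1)·F(2n+3)), where F denotes the Fibonacci sequence with F(1) = F(2) = 1. Then there exists a constant C > 0 such that for all n, |cₙ − α·3ⁿ| ≤ C·(2√2)ⁿ. -/

import Mathlib

/-- The step set S = {(1,1), (−1,1), (1,−1)}. -/
def stepsS : Set (ℤ × ℤ) := {(1, 1), (-1, 1), (1, -1)}

/-- A quarter-plane walk of length `n` with steps from `S`. -/
def IsQuarterWalk (S : Set (ℤ × ℤ)) (n : ℕ) (p : Fin (n + 1) → ℤ × ℤ) : Prop :=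
  p 0 = (0, 0) ∧
  (∀ k : Fin n, p k.succ - p k.castSucc ∈ S) ∧
  (∀ k : Fin (n + 1), 0 ≤ (p k).1 ∧ 0 ≤ (p k).2)

/-- The number of quarter-plane walks of length `n` with steps `S`. -/
noncomputable def numWalks (n : ℕ) : ℕ :=
  Nat.card {p : Fin (n + 1) → ℤ × ℤ // IsQuarterWalk stepsS n p}

/-- The constant α = 1 − 2·∑ (−1)ⁿ/(F(2n+1)F(2n+3)). -/
noncomputable def alphaS : ℝ :=
  1 - 2 * ∑' n : ℕ, (-1 : ℝ) ^ n / ((Nat.fib (2 * n + 1) : ℝ) * (Nat.fib (2 * n + 3) : ℝ))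

/-!
Let `Q(x, y; t)` be the sum of `x ^ i * y ^ j * t ^ n` over all walks, where `n` is the length and
`(i, j)` the endpoint. Removing the last step, and using the symmetry of the steps, gives
`(1 - t * (x * y + y / x + x / y)) * Q(x, y; t) =
  1 - t * (x / y) * Q(x, 0; t) - t * (y / x) * Q(y, 0; t)`.

For `t = 1 / 3` the kernel on the left vanishes at the points `(xₙ, xₙ₊₁)` with `xₙ = 1 / F(2n+1)`,
by Cassini's identity, and the series converge there. Hence `xₙ * xₙ₊₁ = gₙ + gₙ₊₁` for
`gₙ = xₙ ^ 2 * Q(xₙ, 0; 1/3) / 3`, so the alternating sum of the `xₙ * xₙ₊₁` telescopes to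
`g₀ = Q(1, 0; 1/3) / 3`.

On the other hand `cₙ₊₁ = 3 * cₙ - 2 * bₙ`, where `bₙ` counts the walks ending on the horizontal
axis. Weighting the endpoints by `(1 / √2) ^ j` gives `bₙ ≤ (2 * √2) ^ n`, so `cₙ / 3 ^ n` converges
geometrically, with ratio `2 * √2 / 3`, to `1 - 2 / 3 * Q(1, 0; 1/3) = α`.
-/

/-- The finite set of quarter-plane walks of length `n` with steps in `S`: every walk of length
`n + 1` extends one of length `n` by a step that stays in the quadrant. -/
def quarterWalks (S : Finset (ℤ × ℤ)) : (n : ℕ) → Finset (Fin (n + 1) → ℤ × ℤ)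
  | 0 => {0}
  | n + 1 => {w ∈ quarterWalks S n ×ˢ S | 0 ≤ w.1 (Fin.last n) + w.2}.image
      fun w => Fin.snoc w.1 (w.1 (Fin.last n) + w.2)

/-- The sum of the weight `f` over the endpoints of the quarter-plane walks of length `n`. -/
def endpointSum (S : Finset (ℤ × ℤ)) (n : ℕ) (f : ℤ × ℤ → ℝ) : ℝ :=
  ∑ p ∈ quarterWalks S n, f (p (Fin.last n))

/-- The weight `x ^ i * y ^ j` of a point `(i, j)`. The exponents are integers because steps are
weighted too. -/
noncomputable def monomialWeight (x y : ℝ) (q : ℤ × ℤ) : ℝ := x ^ q.1 * y ^ q.2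

/-- The weight `x ^ i` of the points `(i, 0)` of the horizontal axis, extended by zero. -/
noncomputable def axisWeight (x : ℝ) (q : ℤ × ℤ) : ℝ := if q.2 = 0 then x ^ q.1 else 0

/-- The step inventory of `S`, the Laurent polynomial `∑ x ^ i * y ^ j` over `(i, j) ∈ S`. -/
noncomputable def inventory (S : Finset (ℤ × ℤ)) (x y : ℝ) : ℝ := ∑ s ∈ S, monomialWeight x y s

/-- The generating function in `t` of the endpoint sums of `f`. For the weights
`monomialWeight x y` and `axisWeight x` it is the series usually written `Q(x, y; t)` and
`Q(x, 0; t)`. -/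
noncomputable def walkGenFun (S : Finset (ℤ × ℤ)) (t : ℝ) (f : ℤ × ℤ → ℝ) : ℝ :=
  ∑' n, endpointSum S n f * t ^ n

section Walks

variable {S : Finset (ℤ × ℤ)} {n : ℕ} {f g : ℤ × ℤ → ℝ}

lemma isQuarterWalk_snoc {S : Set (ℤ × ℤ)} {p : Fin (n + 1) → ℤ × ℤ} {q : ℤ × ℤ} :
    IsQuarterWalk S (n + 1) (Fin.snoc p q) ↔
      IsQuarterWalk S n p ∧ q - p (Fin.last n) ∈ S ∧ 0 ≤ q := by
  have snoc_zero : (Fin.snoc p q : Fin (n + 2) → ℤ × ℤ) 0 = p 0 := Fin.snoc_apply_zero ..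
  simp only [IsQuarterWalk, snoc_zero, Fin.forall_fin_succ' (n := n),
    Fin.forall_fin_succ' (n := n + 1), Fin.succ_castSucc, Fin.succ_last, Fin.snoc_castSucc,
    Fin.snoc_last, Prod.le_def, Prod.fst_zero, Prod.snd_zero]
  tauto

lemma mem_quarterWalks :
    ∀ {n : ℕ} {p : Fin (n + 1) → ℤ × ℤ}, p ∈ quarterWalks S n ↔ IsQuarterWalk S n p
  | 0, p => by
    rw [quarterWalks, Finset.mem_singleton]
    refine ⟨?_, fun h => funext fun k => ?_⟩
    · rintro rfl
      exact ⟨rfl, fun k => k.elim0, fun _ => ⟨le_rfl, le_rfl⟩⟩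
    · rw [Fin.fin_one_eq_zero k, h.1]
      rfl
  | n + 1, p => by
    rw [← Fin.snoc_init_self p, isQuarterWalk_snoc, ← mem_quarterWalks]
    simp only [quarterWalks, Finset.mem_image, Finset.mem_filter, Finset.mem_product, Fin.snoc_inj]
    constructor
    · rintro ⟨⟨w, s⟩, ⟨⟨hw, hs⟩, hnonneg⟩, rfl, hlast⟩
      rw [← hlast, add_sub_cancel_left]
      exact ⟨hw, hs, hnonneg⟩
    · rintro ⟨hp, hs, hnonneg⟩
      exact ⟨(_, _), ⟨⟨hp, hs⟩, hnonneg.trans_eq (add_sub_cancel ..).symm⟩, rfl, add_sub_cancel ..⟩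

lemma nonneg_of_mem_quarterWalks {p : Fin (n + 1) → ℤ × ℤ} (hp : p ∈ quarterWalks S n)
    (k : Fin (n + 1)) : 0 ≤ p k :=
  (mem_quarterWalks.1 hp).2.2 k

lemma endpointSum_zero : endpointSum S 0 f = f 0 := by
  simp [endpointSum, quarterWalks]

lemma endpointSum_succ :
    endpointSum S (n + 1) f =
      endpointSum S n fun q => ∑ s ∈ S, if 0 ≤ q + s then f (q + s) else 0 := by
  have extend_injective : Function.Injective
      fun w : (Fin (n + 1) → ℤ × ℤ) × (ℤ × ℤ) =>
        (Fin.snoc w.1 (w.1 (Fin.last n) + w.2) : Fin (n + 2) → ℤ × ℤ) := by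
    rintro ⟨p₁, s₁⟩ ⟨p₂, s₂⟩ h
    obtain ⟨rfl, hs⟩ := Fin.snoc_inj.1 h
    exact Prod.ext rfl (add_left_cancel hs)
  simp only [endpointSum, quarterWalks]
  rw [Finset.sum_image extend_injective.injOn, Finset.sum_filter, Finset.sum_product]
  simp only [Fin.snoc_last]

lemma endpointSum_congr (h : ∀ q, 0 ≤ q → f q = g q) : endpointSum S n f = endpointSum S n g :=
  Finset.sum_congr rfl fun _ hp => h _ (nonneg_of_mem_quarterWalks hp _)

lemma endpointSum_mono (h : ∀ q, 0 ≤ q → f q ≤ g q) : endpointSum S n f ≤ endpointSum S n g :=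
  Finset.sum_le_sum fun _ hp => h _ (nonneg_of_mem_quarterWalks hp _)

lemma endpointSum_nonneg (h : ∀ q, 0 ≤ f q) : 0 ≤ endpointSum S n f :=
  Finset.sum_nonneg fun _ _ => h _

lemma endpointSum_sub :
    endpointSum S n (fun q => f q - g q) = endpointSum S n f - endpointSum S n g :=
  Finset.sum_sub_distrib ..

lemma endpointSum_const_mul (c : ℝ) :
    endpointSum S n (fun q => c * f q) = c * endpointSum S n f :=
  (Finset.mul_sum ..).symm

lemma endpointSum_comp_swap (hS : ∀ s, s.swap ∈ S ↔ s ∈ S) :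
    endpointSum S n (fun q => f q.swap) = endpointSum S n f := by
  induction n generalizing f with
  | zero => simp only [endpointSum_zero, Prod.swap_zero]
  | succ n ih =>
    rw [endpointSum_succ, endpointSum_succ, ← ih]
    refine endpointSum_congr fun q _ => ?_
    refine Finset.sum_equiv (Equiv.prodComm ℤ ℤ) (fun s => (hS s).symm) fun s _ => ?_
    have swap_add : (q.swap + s).swap = q + s.swap := rfl
    have nonneg_swap : 0 ≤ q.swap + s ↔ 0 ≤ q + s.swap := and_comm
    exact if_congr nonneg_swap (congrArg f swap_add) rfl

end Walks

section Weights

variable {S : Finset (ℤ × ℤ)} {n : ℕ} {x y : ℝ}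

lemma monomialWeight_nonneg (hx : 0 ≤ x) (hy : 0 ≤ y) (q : ℤ × ℤ) : 0 ≤ monomialWeight x y q := by
  unfold monomialWeight
  positivity

lemma monomialWeight_add (hx : x ≠ 0) (hy : y ≠ 0) (q s : ℤ × ℤ) :
    monomialWeight x y (q + s) = monomialWeight x y q * monomialWeight x y s := by
  simp only [monomialWeight, Prod.fst_add, Prod.snd_add, zpow_add₀ hx, zpow_add₀ hy]
  ring

lemma monomialWeight_mono {a b : ℝ} (hx : 0 ≤ x) (hy : 0 ≤ y) (hxa : x ≤ a) (hyb : y ≤ b)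
    {q : ℤ × ℤ} (hq : 0 ≤ q) : monomialWeight x y q ≤ monomialWeight a b q :=
  mul_le_mul (zpow_le_zpow_left₀ hq.1 hx hxa) (zpow_le_zpow_left₀ hq.2 hy hyb) (zpow_nonneg hy _)
    (zpow_nonneg (hx.trans hxa) _)

lemma inventory_nonneg (hx : 0 ≤ x) (hy : 0 ≤ y) : 0 ≤ inventory S x y :=
  Finset.sum_nonneg fun s _ => monomialWeight_nonneg hx hy s

lemma axisWeight_nonneg (hx : 0 ≤ x) (q : ℤ × ℤ) : 0 ≤ axisWeight x q := by
  unfold axisWeight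
  positivity

lemma axisWeight_le_monomialWeight (hx : 0 ≤ x) (hy : 0 ≤ y) (q : ℤ × ℤ) :
    axisWeight x q ≤ monomialWeight x y q := by
  rw [axisWeight]
  split_ifs with hq
  · simp only [monomialWeight, hq, zpow_zero, mul_one, le_refl]
  · exact monomialWeight_nonneg hx hy q

lemma endpointSum_monomialWeight_le (hx : 0 < x) (hy : 0 < y) :
    endpointSum S n (monomialWeight x y) ≤ inventory S x y ^ n := by
  induction n with
  | zero => simp [endpointSum_zero, monomialWeight]
  | succ n ih =>
    calc endpointSum S (n + 1) (monomialWeight x y)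
        = endpointSum S n fun q => ∑ s ∈ S,
            if 0 ≤ q + s then monomialWeight x y (q + s) else 0 := endpointSum_succ
      _ ≤ endpointSum S n fun q => inventory S x y * monomialWeight x y q := by
        refine endpointSum_mono fun q _ => ?_
        rw [mul_comm, inventory, Finset.mul_sum]
        refine Finset.sum_le_sum fun s _ => ?_
        rw [← monomialWeight_add hx.ne' hy.ne']
        split_ifs
        · exact le_rfl
        · exact monomialWeight_nonneg hx.le hy.le _
      _ = inventory S x y * endpointSum S n (monomialWeight x y) := endpointSum_const_mul _
      _ ≤ inventory S x y * inventory S x y ^ n := by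
        gcongr
        exact inventory_nonneg hx.le hy.le
      _ = inventory S x y ^ (n + 1) := (pow_succ' ..).symm

lemma endpointSum_axisWeight_le (hx : 0 < x) (hy : 0 < y) :
    endpointSum S n (axisWeight x) ≤ inventory S x y ^ n :=
  (endpointSum_mono fun q _ => axisWeight_le_monomialWeight hx.le hy.le q).trans
    (endpointSum_monomialWeight_le hx hy)

lemma summable_endpointSum_mul_pow {f g : ℤ × ℤ → ℝ} {t : ℝ} (ht : 0 ≤ t) (hf : ∀ q, 0 ≤ f q)
    (hfg : ∀ q, 0 ≤ q → f q ≤ g q) (hg : Summable fun n => endpointSum S n g * t ^ n) :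
    Summable fun n => endpointSum S n f * t ^ n :=
  hg.of_nonneg_of_le (fun _ => mul_nonneg (endpointSum_nonneg hf) (pow_nonneg ht _))
    fun _ => mul_le_mul_of_nonneg_right (endpointSum_mono hfg) (pow_nonneg ht _)

lemma summable_monomialWeight_mul_pow {a b t : ℝ} (hx : 0 ≤ x) (hxa : x ≤ a) (ha : 0 < a)
    (hy : 0 ≤ y) (hyb : y ≤ b) (hb : 0 < b) (ht : 0 ≤ t) (hlt : inventory S a b * t < 1) :
    Summable fun n => endpointSum S n (monomialWeight x y) * t ^ n := by
  refine summable_endpointSum_mul_pow ht (monomialWeight_nonneg hx hy)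
    (fun q hq => monomialWeight_mono hx hy hxa hyb hq) ?_
  have hratio : 0 ≤ inventory S a b * t := mul_nonneg (inventory_nonneg ha.le hb.le) ht
  refine (summable_geometric_of_lt_one hratio hlt).of_nonneg_of_le
    (fun n => mul_nonneg (endpointSum_nonneg (monomialWeight_nonneg ha.le hb.le)) (pow_nonneg ht n))
    fun n => ?_
  rw [mul_pow]
  gcongr
  exact endpointSum_monomialWeight_le ha hb

lemma walkGenFun_nonneg {f : ℤ × ℤ → ℝ} {t : ℝ} (ht : 0 ≤ t) (hf : ∀ q, 0 ≤ f q) :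
    0 ≤ walkGenFun S t f :=
  tsum_nonneg fun _ => mul_nonneg (endpointSum_nonneg hf) (pow_nonneg ht _)

end Weights

section FunctionalEquation

/-- The step set `stepsS` as a finset. -/
def stepsFinset : Finset (ℤ × ℤ) := {(1, 1), (-1, 1), (1, -1)}

variable {n : ℕ} {x y t : ℝ}

lemma coe_stepsFinset : (stepsFinset : Set (ℤ × ℤ)) = stepsS := by
  simp [stepsFinset, stepsS]

lemma swap_mem_stepsFinset (s : ℤ × ℤ) : s.swap ∈ stepsFinset ↔ s ∈ stepsFinset := by
  obtain ⟨i, j⟩ := s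
  simp only [stepsFinset, Finset.mem_insert, Finset.mem_singleton, Prod.swap_prod_mk,
    Prod.mk.injEq]
  tauto

lemma numWalks_eq_endpointSum (n : ℕ) :
    (numWalks n : ℝ) = endpointSum stepsFinset n (monomialWeight 1 1) := by
  have card_eq : numWalks n = (quarterWalks stepsFinset n).card :=
    Nat.subtype_card _ fun p => by rw [mem_quarterWalks, coe_stepsFinset]
  simp [card_eq, endpointSum, monomialWeight]

lemma sum_stepsFinset (f : ℤ × ℤ → ℝ) :
    ∑ s ∈ stepsFinset, f s = f (1, 1) + f (-1, 1) + f (1, -1) := by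
  simp [stepsFinset, add_assoc]

lemma inventory_stepsFinset (x y : ℝ) :
    inventory stepsFinset x y = x * y + y / x + x / y := by
  simp only [inventory, sum_stepsFinset, monomialWeight, zpow_one, zpow_neg_one]
  ring

lemma sum_stepsFinset_monomialWeight (hx : x ≠ 0) (hy : y ≠ 0) {q : ℤ × ℤ} (hq : 0 ≤ q) :
    (∑ s ∈ stepsFinset, if 0 ≤ q + s then monomialWeight x y (q + s) else 0) =
      inventory stepsFinset x y * monomialWeight x y q - y / x * axisWeight y q.swap -
        x / y * axisWeight x q := by
  have northeast : 0 ≤ q + (1, 1) := add_nonneg hq ⟨zero_le_one, zero_le_one⟩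
  have northwest : 0 ≤ q + (-1, 1) ↔ ¬q.1 = 0 := by
    simp only [Prod.le_def, Prod.fst_add, Prod.snd_add, Prod.fst_zero, Prod.snd_zero] at hq ⊢
    omega
  have southeast : 0 ≤ q + (1, -1) ↔ ¬q.2 = 0 := by
    simp only [Prod.le_def, Prod.fst_add, Prod.snd_add, Prod.fst_zero, Prod.snd_zero] at hq ⊢
    omega
  have axis_left : axisWeight y q.swap = if q.1 = 0 then monomialWeight x y q else 0 := by
    simp +contextual [axisWeight, monomialWeight]
  have axis_bottom : axisWeight x q = if q.2 = 0 then monomialWeight x y q else 0 := by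
    simp +contextual [axisWeight, monomialWeight]
  have inventory_eq : inventory stepsFinset x y =
      monomialWeight x y (1, 1) + monomialWeight x y (-1, 1) + monomialWeight x y (1, -1) :=
    sum_stepsFinset _
  have weight_northwest : monomialWeight x y (-1, 1) = y / x := by
    simp only [monomialWeight, zpow_one, zpow_neg_one, div_eq_inv_mul]
  have weight_southeast : monomialWeight x y (1, -1) = x / y := by
    simp only [monomialWeight, zpow_one, zpow_neg_one, div_eq_mul_inv]
  simp only [sum_stepsFinset, northeast, northwest, southeast, if_true, ite_not,
    monomialWeight_add hx hy, axis_left, axis_bottom, inventory_eq, weight_northwest,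
    weight_southeast]
  split_ifs <;> ring

lemma endpointSum_succ_monomialWeight (hx : x ≠ 0) (hy : y ≠ 0) :
    endpointSum stepsFinset (n + 1) (monomialWeight x y) =
      inventory stepsFinset x y * endpointSum stepsFinset n (monomialWeight x y) -
        y / x * endpointSum stepsFinset n (axisWeight y) -
        x / y * endpointSum stepsFinset n (axisWeight x) := by
  rw [endpointSum_succ, endpointSum_congr fun q hq => sum_stepsFinset_monomialWeight hx hy hq,
    endpointSum_sub, endpointSum_sub, endpointSum_const_mul, endpointSum_const_mul,
    endpointSum_const_mul, endpointSum_comp_swap swap_mem_stepsFinset]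

lemma summable_axisWeight_mul_pow_right (hx : 0 ≤ x) (hy : 0 ≤ y) (ht : 0 ≤ t)
    (hQ : Summable fun n => endpointSum stepsFinset n (monomialWeight x y) * t ^ n) :
    Summable fun n => endpointSum stepsFinset n (axisWeight y) * t ^ n := by
  have monomialWeight_swap : (fun q : ℤ × ℤ => monomialWeight x y q.swap) = monomialWeight y x :=
    funext fun q => mul_comm ..
  refine summable_endpointSum_mul_pow ht (axisWeight_nonneg hy)
    (fun q _ => axisWeight_le_monomialWeight hy hx q) ?_
  simpa only [← monomialWeight_swap, endpointSum_comp_swap swap_mem_stepsFinset] using hQ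

lemma kernel_mul_walkGenFun (hx : 0 < x) (hy : 0 < y) (ht : 0 ≤ t)
    (hQ : Summable fun n => endpointSum stepsFinset n (monomialWeight x y) * t ^ n) :
    (1 - t * inventory stepsFinset x y) * walkGenFun stepsFinset t (monomialWeight x y) =
      1 - t * (y / x) * walkGenFun stepsFinset t (axisWeight y) -
        t * (x / y) * walkGenFun stepsFinset t (axisWeight x) := by
  have hRx : Summable fun n => endpointSum stepsFinset n (axisWeight x) * t ^ n :=
    summable_endpointSum_mul_pow ht (axisWeight_nonneg hx.le)
      (fun q _ => axisWeight_le_monomialWeight hx.le hy.le q) hQ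
  have hRy := summable_axisWeight_mul_pow_right hx.le hy.le ht hQ
  have hstep : ∀ n, endpointSum stepsFinset (n + 1) (monomialWeight x y) * t ^ (n + 1) =
      t * inventory stepsFinset x y * (endpointSum stepsFinset n (monomialWeight x y) * t ^ n) -
        t * (y / x) * (endpointSum stepsFinset n (axisWeight y) * t ^ n) -
        t * (x / y) * (endpointSum stepsFinset n (axisWeight x) * t ^ n) := fun n => by
    rw [endpointSum_succ_monomialWeight hx.ne' hy.ne']
    ring
  have hsum : HasSum
      (fun n => endpointSum stepsFinset (n + 1) (monomialWeight x y) * t ^ (n + 1))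
      (t * inventory stepsFinset x y * walkGenFun stepsFinset t (monomialWeight x y) -
        t * (y / x) * walkGenFun stepsFinset t (axisWeight y) -
        t * (x / y) * walkGenFun stepsFinset t (axisWeight x)) := by
    simp only [hstep]
    exact ((hQ.hasSum.mul_left _).sub (hRy.hasSum.mul_left _)).sub (hRx.hasSum.mul_left _)
  have hzero : endpointSum stepsFinset 0 (monomialWeight x y) * t ^ 0 = 1 := by
    simp [endpointSum_zero, monomialWeight]
  have hunfold : walkGenFun stepsFinset t (monomialWeight x y) =
      1 + ∑' n, endpointSum stepsFinset (n + 1) (monomialWeight x y) * t ^ (n + 1) := by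
    rw [walkGenFun, hQ.tsum_eq_zero_add, hzero]
  rw [hsum.tsum_eq] at hunfold
  linear_combination hunfold

lemma mul_eq_of_kernel_eq_zero (hx : 0 < x) (hy : 0 < y) (ht : 0 ≤ t)
    (hQ : Summable fun n => endpointSum stepsFinset n (monomialWeight x y) * t ^ n)
    (hkernel : 1 - t * inventory stepsFinset x y = 0) :
    x * y = t * x ^ 2 * walkGenFun stepsFinset t (axisWeight x) +
      t * y ^ 2 * walkGenFun stepsFinset t (axisWeight y) := by
  have key := kernel_mul_walkGenFun hx hy ht hQ
  rw [hkernel, zero_mul] at key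
  field_simp at key
  linear_combination -key

-- At `x = 1` the inventory is `2 * y + 1 / y`, and `y = 1 / √2` minimises it.
lemma inventory_one_inv_sqrt_two : inventory stepsFinset 1 (√2)⁻¹ = 2 * √2 := by
  have sq_sqrt_two : √2 ^ 2 = (2 : ℝ) := Real.sq_sqrt zero_le_two
  rw [inventory_stepsFinset]
  field_simp
  linear_combination -sq_sqrt_two

lemma two_mul_sqrt_two_lt_three : 2 * √2 < 3 := by
  have : √2 < 3 / 2 := (Real.sqrt_lt' (by norm_num)).2 (by norm_num)
  linarith

end FunctionalEquation

section Series

lemma tsum_neg_one_pow_mul_add_succ {g : ℕ → ℝ} (hg : Summable g) :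
    ∑' n, (-1) ^ n * (g n + g (n + 1)) = g 0 := by
  have halt : Summable fun n => (-1) ^ n * g n :=
    Summable.of_norm (by simpa only [norm_mul, norm_pow, norm_neg, norm_one, one_pow, one_mul]
      using hg.norm)
  have hterm : ∀ n, (-1) ^ n * (g n + g (n + 1)) =
      (-1) ^ n * g n - (-1) ^ (n + 1) * g (n + 1) := fun n => by ring
  rw [tsum_congr hterm, halt.tsum_sub ((summable_nat_add_iff 1).2 halt), halt.tsum_eq_zero_add,
    add_sub_cancel_right, pow_zero, one_mul]

lemma div_pow_sub_div_pow_succ_of_recurrence {c d : ℕ → ℝ} {r : ℝ} (hr : r ≠ 0)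
    (hrec : ∀ n, c (n + 1) = r * c n - d n) (n : ℕ) :
    c n / r ^ n - c (n + 1) / r ^ (n + 1) = d n / r ^ (n + 1) := by
  rw [hrec]
  field_simp
  ring

lemma tendsto_div_pow_of_recurrence {c d : ℕ → ℝ} {r : ℝ} (hr : r ≠ 0)
    (hrec : ∀ n, c (n + 1) = r * c n - d n) (hd : Summable fun k => d k / r ^ (k + 1)) :
    Filter.Tendsto (fun n => c n / r ^ n) Filter.atTop
      (nhds (c 0 - ∑' k, d k / r ^ (k + 1))) := by
  have hpartial : ∀ n, ∑ k ∈ Finset.range n, d k / r ^ (k + 1) = c 0 - c n / r ^ n := fun n => by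
    simp only [← div_pow_sub_div_pow_succ_of_recurrence hr hrec, Finset.sum_range_sub', pow_zero,
      div_one]
  simpa only [hpartial, sub_sub_cancel] using hd.hasSum.tendsto_sum_nat.const_sub (c 0)

lemma abs_sub_mul_pow_le_of_recurrence {c d : ℕ → ℝ} {r ρ B : ℝ} (hρ : 0 ≤ ρ) (hlt : ρ < r)
    (hrec : ∀ n, c (n + 1) = r * c n - d n) (hd : ∀ n, |d n| ≤ B * ρ ^ n) (n : ℕ) :
    |c n - (c 0 - ∑' k, d k / r ^ (k + 1)) * r ^ n| ≤ B / (r - ρ) * ρ ^ n := by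
  have hr : 0 < r := hρ.trans_lt hlt
  have hratio : ρ / r < 1 := (div_lt_one hr).2 hlt
  have hbound : ∀ k, |d k / r ^ (k + 1)| ≤ B / r * (ρ / r) ^ k := fun k => by
    rw [abs_div, abs_of_pos (pow_pos hr _), div_pow, div_mul_div_comm, ← pow_succ']
    gcongr
    exact hd k
  have hsummable : Summable fun k => d k / r ^ (k + 1) :=
    .of_norm_bounded ((summable_geometric_of_lt_one (by positivity) hratio).mul_left _) hbound
  have hstep (k : ℕ) : dist (c k / r ^ k) (c (k + 1) / r ^ (k + 1)) ≤ B / r * (ρ / r) ^ k := by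
    rw [Real.dist_eq, div_pow_sub_div_pow_succ_of_recurrence hr.ne' hrec]
    exact hbound k
  have hdist := dist_le_of_le_geometric_of_tendsto (ρ / r) (B / r) hratio hstep
    (tendsto_div_pow_of_recurrence hr.ne' hrec hsummable) n
  have hscale : c n - (c 0 - ∑' k, d k / r ^ (k + 1)) * r ^ n =
      (c n / r ^ n - (c 0 - ∑' k, d k / r ^ (k + 1))) * r ^ n := by
    rw [sub_mul (c n / r ^ n), div_mul_cancel₀ _ (pow_pos hr n).ne']
  calc |c n - (c 0 - ∑' k, d k / r ^ (k + 1)) * r ^ n|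
      = |c n / r ^ n - (c 0 - ∑' k, d k / r ^ (k + 1))| * r ^ n := by
        rw [hscale, abs_mul, abs_of_pos (pow_pos hr n)]
    _ ≤ B / r * (ρ / r) ^ n / (1 - ρ / r) * r ^ n := by
        gcongr
        exact hdist
    _ = B / (r - ρ) * ρ ^ n := by
        rw [one_sub_div hr.ne', div_pow]
        field_simp

end Series

section KernelRoots

lemma two_pow_le_fib_two_mul_add_one (n : ℕ) : 2 ^ n ≤ Nat.fib (2 * n + 1) := by
  induction n with
  | zero => exact le_rfl
  | succ n ih =>
    have hmono : Nat.fib (2 * n + 1) ≤ Nat.fib (2 * n + 2) := Nat.fib_le_fib_succ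
    calc 2 ^ (n + 1) = 2 ^ n + 2 ^ n := by ring
      _ ≤ Nat.fib (2 * n + 1) + Nat.fib (2 * n + 2) := add_le_add ih (ih.trans hmono)
      _ = Nat.fib (2 * (n + 1) + 1) := Nat.fib_add_two.symm

lemma fib_odd_sq_add_fib_odd_sq (n : ℕ) :
    (Nat.fib (2 * n + 1) : ℝ) ^ 2 + (Nat.fib (2 * n + 3) : ℝ) ^ 2 + 1 =
      3 * Nat.fib (2 * n + 1) * Nat.fib (2 * n + 3) := by
  have cassini_int : (Nat.fib (2 * n + 3) : ℤ) * Nat.fib (2 * n + 1) - Nat.fib (2 * n + 2) ^ 2 =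
      1 := by
    have cassini := Int.fib_succ_mul_fib_pred_sub_fib_sq (2 * n + 2 : ℕ)
    rwa [show ((2 * n + 2 : ℕ) + 1 : ℤ) = (2 * n + 3 : ℕ) by push_cast; ring,
      show ((2 * n + 2 : ℕ) - 1 : ℤ) = (2 * n + 1 : ℕ) by push_cast; ring,
      Int.natAbs_natCast, Even.neg_one_pow ⟨n + 1, by ring⟩] at cassini
  have cassini : (Nat.fib (2 * n + 3) : ℝ) * Nat.fib (2 * n + 1) - Nat.fib (2 * n + 2) ^ 2 = 1 :=
    mod_cast cassini_int
  have hrec : (Nat.fib (2 * n + 3) : ℝ) = Nat.fib (2 * n + 1) + Nat.fib (2 * n + 2) := by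
    exact_mod_cast Nat.fib_add_two
  rw [hrec] at cassini ⊢
  linear_combination -cassini

/-- The numbers `1 / F(2n+1)`. Consecutive ones are the coordinates of a zero of the kernel
`1 - t * inventory stepsFinset x y` at `t = 1 / 3`. -/
noncomputable def kernelRoot (n : ℕ) : ℝ := 1 / Nat.fib (2 * n + 1)

lemma kernelRoot_zero : kernelRoot 0 = 1 := by
  simp [kernelRoot]

lemma kernelRoot_pos (n : ℕ) : 0 < kernelRoot n :=
  one_div_pos.2 (Nat.cast_pos.2 (Nat.fib_pos.2 (Nat.succ_pos _)))

lemma kernelRoot_le_half_pow (n : ℕ) : kernelRoot n ≤ (1 / 2) ^ n := by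
  rw [one_div_pow, kernelRoot]
  gcongr
  exact_mod_cast two_pow_le_fib_two_mul_add_one n

lemma kernelRoot_le_one (n : ℕ) : kernelRoot n ≤ 1 :=
  (kernelRoot_le_half_pow n).trans (pow_le_one₀ (by norm_num) (by norm_num))

lemma kernelRoot_succ_le (n : ℕ) : kernelRoot (n + 1) ≤ (√2)⁻¹ := by
  have hsqrt : √2 ≤ 2 := by linarith [two_mul_sqrt_two_lt_three]
  calc kernelRoot (n + 1) ≤ (1 / 2) ^ (n + 1) := kernelRoot_le_half_pow _
    _ ≤ 1 / 2 := pow_le_of_le_one (by norm_num) (by norm_num) n.succ_ne_zero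
    _ ≤ (√2)⁻¹ := by
      rw [one_div]
      gcongr

lemma inventory_kernelRoot (n : ℕ) :
    inventory stepsFinset (kernelRoot n) (kernelRoot (n + 1)) = 3 := by
  have hn : (Nat.fib (2 * n + 1) : ℝ) ≠ 0 := by simp
  have hsucc : (Nat.fib (2 * n + 3) : ℝ) ≠ 0 := by simp
  rw [inventory_stepsFinset, kernelRoot, kernelRoot, show 2 * (n + 1) + 1 = 2 * n + 3 by ring]
  field_simp
  linear_combination fib_odd_sq_add_fib_odd_sq n

/-- The contribution `x² / 3 * Q(x, 0; 1/3)` of `x = kernelRoot n` to the kernel relation. -/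
noncomputable def boundaryTerm (n : ℕ) : ℝ :=
  1 / 3 * kernelRoot n ^ 2 * walkGenFun stepsFinset (1 / 3) (axisWeight (kernelRoot n))

lemma kernelRoot_mul_kernelRoot_succ (n : ℕ) :
    kernelRoot n * kernelRoot (n + 1) = boundaryTerm n + boundaryTerm (n + 1) := by
  refine mul_eq_of_kernel_eq_zero (kernelRoot_pos n) (kernelRoot_pos (n + 1)) (by norm_num) ?_ ?_
  · refine summable_monomialWeight_mul_pow (kernelRoot_pos n).le (kernelRoot_le_one n) one_pos
      (kernelRoot_pos _).le (kernelRoot_succ_le n) (by positivity) (by norm_num) ?_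
    rw [inventory_one_inv_sqrt_two]
    linarith [two_mul_sqrt_two_lt_three]
  · rw [inventory_kernelRoot]
    norm_num

lemma boundaryTerm_nonneg (n : ℕ) : 0 ≤ boundaryTerm n :=
  mul_nonneg (by positivity)
    (walkGenFun_nonneg (by norm_num) (axisWeight_nonneg (kernelRoot_pos n).le))

lemma summable_boundaryTerm : Summable boundaryTerm := by
  refine summable_geometric_two.of_nonneg_of_le boundaryTerm_nonneg fun n => ?_
  calc boundaryTerm n ≤ boundaryTerm n + boundaryTerm (n + 1) :=
        le_add_of_nonneg_right (boundaryTerm_nonneg _)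
    _ = kernelRoot n * kernelRoot (n + 1) := (kernelRoot_mul_kernelRoot_succ n).symm
    _ ≤ kernelRoot n := mul_le_of_le_one_right (kernelRoot_pos n).le (kernelRoot_le_one _)
    _ ≤ (1 / 2) ^ n := kernelRoot_le_half_pow n

lemma tsum_neg_one_pow_div_fib_mul_fib :
    ∑' n : ℕ, (-1 : ℝ) ^ n / ((Nat.fib (2 * n + 1) : ℝ) * (Nat.fib (2 * n + 3) : ℝ)) =
      1 / 3 * walkGenFun stepsFinset (1 / 3) (axisWeight 1) := by
  have hterm : ∀ n : ℕ, (-1 : ℝ) ^ n / (Nat.fib (2 * n + 1) * Nat.fib (2 * n + 3)) =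
      (-1) ^ n * (boundaryTerm n + boundaryTerm (n + 1)) := fun n => by
    rw [← kernelRoot_mul_kernelRoot_succ, kernelRoot, kernelRoot, one_div_mul_one_div,
      mul_one_div]
    rfl
  rw [tsum_congr hterm, tsum_neg_one_pow_mul_add_succ summable_boundaryTerm, boundaryTerm,
    kernelRoot_zero, one_pow, mul_one]

end KernelRoots

lemma numWalks_succ (n : ℕ) :
    (numWalks (n + 1) : ℝ) = 3 * numWalks n - 2 * endpointSum stepsFinset n (axisWeight 1) := by
  rw [numWalks_eq_endpointSum, numWalks_eq_endpointSum,
    endpointSum_succ_monomialWeight one_ne_zero one_ne_zero, inventory_stepsFinset]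
  ring

lemma alphaS_eq_sub_tsum :
    alphaS = numWalks 0 -
      ∑' k, 2 * endpointSum stepsFinset k (axisWeight 1) / (3 : ℝ) ^ (k + 1) := by
  have hterm : ∀ k, 2 * endpointSum stepsFinset k (axisWeight 1) / (3 : ℝ) ^ (k + 1) =
      2 * (1 / 3) * (endpointSum stepsFinset k (axisWeight 1) * (1 / 3) ^ k) := fun k => by
    rw [one_div_pow, pow_succ]
    field_simp
  rw [alphaS, tsum_neg_one_pow_div_fib_mul_fib, tsum_congr hterm, tsum_mul_left, ← walkGenFun,
    numWalks_eq_endpointSum, endpointSum_zero]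
  simp [monomialWeight, mul_assoc]

theorem stmt_7 :
    ∃ C : ℝ, 0 < C ∧ ∀ n : ℕ,
      |(numWalks n : ℝ) - alphaS * 3 ^ n| ≤ C * (2 * Real.sqrt 2) ^ n := by
  have hlt := two_mul_sqrt_two_lt_three
  have hboundary : ∀ n, |2 * endpointSum stepsFinset n (axisWeight 1)| ≤ 2 * (2 * √2) ^ n := by
    intro n
    rw [abs_of_nonneg (mul_nonneg zero_le_two (endpointSum_nonneg (axisWeight_nonneg zero_le_one))),
      ← inventory_one_inv_sqrt_two]
    gcongr
    exact endpointSum_axisWeight_le one_pos (by positivity)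
  refine ⟨2 / (3 - 2 * √2), div_pos two_pos (sub_pos.2 hlt), fun n => ?_⟩
  rw [alphaS_eq_sub_tsum]
  exact abs_sub_mul_pow_le_of_recurrence (c := fun n => numWalks n) (by positivity) hlt
    numWalks_succ hboundary n
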